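/- There exists an absolute constant c > 0 such that the following holds. Let A ⊂ ℝ be a finite set with |A| ≥ 3, let f : ℝ → ℝ be strictly convex or strictly concave, let a < a' be a nearest consecutive pair of elements of A, and let b < b' be a second nearest consecutive pair of elements of A. Then both |f(a+A) + f(a'+A) − f(a+A)| ≥ c · |A|² and |f(b+A) + f(b'+A) − f(b+A)| ≥ c · |A|². -/

import Mathlib

/-!
Let `B` be a finite set whose distinct elements are at least `d > 0` apart, let `t' = t + d`, let
`f` be strictly convex and put `u x = f (t + x)`, `g x = f (t' + x) - f (t + x)`. Then `g` is
strictly increasing, hence vanishes at most once, so about half of `B` lies in `{g > 0}` or in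
`{g < 0}`. On `{g > 0}` the function `f` increases, and because `d` is at most every gap of `B`,
the half-open intervals `(u x, u x + g x]` are disjoint for distinct `x`. Each of them contains all
the numbers `u x + g y` with `0 < g y ≤ g x`, which gives quadratically many distinct elements of
the form `f (t + x) + f (t' + y) - f (t + y)` (`card_sq_le_of_squeeze`). On `{g < 0}` the same
argument applies to `-u` and `-g`.

For the nearest pair take `B = A`. For the second nearest pair take `B = A \ {a}`: every element
`x ≠ a` of `A` is at distance at least `b' - b` from its successor in `A`. The concave case
reduces to the convex one by replacing `f` with `-f`.
-/

open Finset Pointwise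

/-- For `f : ℝ → ℝ`, `t : ℝ` and a finite set `A ⊆ ℝ`, the set `f(t + A) = {f (t + x) : x ∈ A}`. -/
noncomputable def fShift (f : ℝ → ℝ) (t : ℝ) (A : Finset ℝ) : Finset ℝ := A.image fun x => f (t + x)

/-- `a < a'` are consecutive elements of the finite set `A`. -/
noncomputable def ConsecPair (A : Finset ℝ) (a a' : ℝ) : Prop :=
  a ∈ A ∧ a' ∈ A ∧ a < a' ∧ ∀ x ∈ A, ¬(a < x ∧ x < a')

/-- `a < a'` is a nearest consecutive pair of `A`: consecutive elements whose difference
`a' - a` is the minimum positive element of `A - A`. -/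
noncomputable def NearestPair (A : Finset ℝ) (a a' : ℝ) : Prop :=
  ConsecPair A a a' ∧ ∀ x ∈ A, ∀ y ∈ A, x < y → a' - a ≤ y - x

/-- `b < b'` is a second nearest consecutive pair of `A` (relative to the nearest pair
`(a, a')`): a consecutive pair such that any consecutive pair with strictly smaller gap
equals `(a, a')`. -/
noncomputable def SecondNearestPair (A : Finset ℝ) (a a' b b' : ℝ) : Prop :=
  ConsecPair A b b' ∧
    ∀ c ∈ A, ∀ c' ∈ A, ConsecPair A c c' → c' - c < b' - b → c = a ∧ c' = a'

lemma StrictConvexOn.increment_lt {f : ℝ → ℝ} (hf : StrictConvexOn ℝ Set.univ f)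
    {x y d : ℝ} (hxy : x < y) (hd : 0 < d) : f (x + d) - f x < f (y + d) - f y := by
  -- `x + d` and `y` are complementary convex combinations of `x` and `y + d`
  have hs : 0 < y - x + d := by linarith
  have hne : y - x + d ≠ 0 := hs.ne'
  have hl : 0 < d / (y - x + d) := div_pos hd hs
  have hm : 0 < (y - x) / (y - x + d) := div_pos (by linarith) hs
  have hsum : (y - x) / (y - x + d) + d / (y - x + d) = 1 := by
    rw [← add_div, div_self hne]
  have h1 := hf.2 (Set.mem_univ x) (Set.mem_univ (y + d)) (by linarith) hm hl hsum
  have h2 := hf.2 (Set.mem_univ x) (Set.mem_univ (y + d)) (by linarith) hl hm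
    (by rw [add_comm]; exact hsum)
  simp only [smul_eq_mul] at h1 h2
  have e1 : (y - x) / (y - x + d) * x + d / (y - x + d) * (y + d) = x + d := by
    field_simp; ring
  have e2 : d / (y - x + d) * x + (y - x) / (y - x + d) * (y + d) = y := by
    field_simp; ring
  rw [e1] at h1
  rw [e2] at h2
  have hl' : d / (y - x + d) = 1 - (y - x) / (y - x + d) := by linarith
  rw [hl'] at h1 h2
  linarith

/-- The squeezing principle: for `0 < g y ≤ g x` the number `u x + g y` lies in
`(u x, u x + g x]`, and these intervals are pairwise disjoint. At least half of all pairs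
`(x, y)` satisfy `g y ≤ g x`. -/
lemma card_sq_le_of_squeeze (P S : Finset ℝ) (u g : ℝ → ℝ)
    (hpos : ∀ x ∈ P, 0 < g x) (hinj : Set.InjOn g P)
    (hstep : ∀ x ∈ P, ∀ y ∈ P, x < y → u x + g x ≤ u y)
    (hS : ∀ x ∈ P, ∀ y ∈ P, u x + g y ∈ S) : P.card ^ 2 ≤ 2 * S.card := by
  classical
  set T := (P ×ˢ P).filter fun p => g p.2 ≤ g p.1 with hT
  have hTS : T.card ≤ S.card := by
    apply Finset.card_le_card_of_injOn (fun p => u p.1 + g p.2)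
    · intro p hp
      simp only [hT, Finset.coe_filter, Finset.mem_product, Set.mem_ofPred_eq] at hp
      exact hS _ hp.1.1 _ hp.1.2
    · rintro ⟨x, y⟩ hp ⟨x', y'⟩ hq h
      simp only [hT, Finset.coe_filter, Finset.mem_product, Set.mem_ofPred_eq] at hp hq h
      obtain ⟨⟨hx, hy⟩, hyx⟩ := hp
      obtain ⟨⟨hx', hy'⟩, hyx'⟩ := hq
      have p1 := hpos y hy
      have p2 := hpos y' hy'
      rcases lt_trichotomy x x' with hlt | rfl | hlt
      · have := hstep x hx x' hx' hlt
        linarith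
      · have : y = y' := hinj hy hy' (by linarith)
        rw [this]
      · have := hstep x' hx' x hx hlt
        linarith
  have hcov : P ×ˢ P ⊆ T ∪ T.image Prod.swap := by
    rintro ⟨x, y⟩ hp
    rw [Finset.mem_product] at hp
    rcases le_total (g y) (g x) with h | h
    · exact Finset.mem_union_left _ (Finset.mem_filter.2 ⟨Finset.mem_product.2 hp, h⟩)
    · exact Finset.mem_union_right _ (Finset.mem_image.2
        ⟨(y, x), Finset.mem_filter.2 ⟨Finset.mem_product.2 ⟨hp.2, hp.1⟩, h⟩, rfl⟩)
  have h1 := Finset.card_le_card hcov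
  have h2 := Finset.card_union_le T (T.image Prod.swap)
  have h3 : (T.image Prod.swap).card ≤ T.card := Finset.card_image_le
  rw [Finset.card_product] at h1
  rw [pow_two]
  omega

lemma convex_separated_bound {f : ℝ → ℝ} (hf : StrictConvexOn ℝ Set.univ f)
    (B : Finset ℝ) (t t' : ℝ) (ht : t < t')
    (hsep : ∀ x ∈ B, ∀ y ∈ B, x < y → t' - t ≤ y - x) :
    ∃ m : ℕ, B.card ≤ 2 * m + 1 ∧
      m ^ 2 ≤ 2 * (fShift f t B + fShift f t' B - fShift f t B).card := by
  classical
  set S := fShift f t B + fShift f t' B - fShift f t B with hS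
  set g : ℝ → ℝ := fun x => f (t' + x) - f (t + x) with hg
  have hmono : StrictMono g := by
    intro x y hxy
    have := hf.increment_lt (x := t + x) (y := t + y) (d := t' - t) (by linarith) (by linarith)
    have e1 : t + x + (t' - t) = t' + x := by ring
    have e2 : t + y + (t' - t) = t' + y := by ring
    rwa [e1, e2] at this
  have hmem : ∀ x ∈ B, ∀ y ∈ B, f (t + x) + g y ∈ S := by
    intro x hx y hy
    have : f (t + x) + g y = f (t + x) + f (t' + y) - f (t + y) := by simp only [hg]; ring
    rw [this]
    exact Finset.sub_mem_sub (Finset.add_mem_add (Finset.mem_image_of_mem _ hx)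
      (Finset.mem_image_of_mem _ hy)) (Finset.mem_image_of_mem _ hy)
  have hP : (B.filter fun x => 0 < g x).card ^ 2 ≤ 2 * S.card := by
    apply card_sq_le_of_squeeze _ S (fun x => f (t + x)) g
    · exact fun x hx => (Finset.mem_filter.1 hx).2
    · exact hmono.injective.injOn
    · intro x hx y hy hxy
      obtain ⟨hxB, hx0⟩ := Finset.mem_filter.1 hx
      have hs := hsep x hxB y (Finset.mem_filter.1 hy).1 hxy
      have hm := hf.convexOn.le_max_of_mem_Icc (x := t + x) (y := t + y) (z := t' + x)
        (Set.mem_univ _) (Set.mem_univ _) ⟨by linarith, by linarith⟩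
      simp only [hg] at hx0 ⊢
      rcases le_max_iff.1 hm with h | h <;> linarith
    · exact fun x hx y hy => hmem x (Finset.mem_filter.1 hx).1 y (Finset.mem_filter.1 hy).1
  have hN : (B.filter fun x => g x < 0).card ^ 2 ≤ 2 * S.card := by
    rw [← Finset.card_neg S]
    apply card_sq_le_of_squeeze _ (-S) (fun x => -f (t + x)) (fun x => -g x)
    · exact fun x hx => neg_pos.2 (Finset.mem_filter.1 hx).2
    · exact (neg_injective.comp hmono.injective).injOn
    · intro x hx y hy hxy
      obtain ⟨hyB, hy0⟩ := Finset.mem_filter.1 hy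
      have hs := hsep x (Finset.mem_filter.1 hx).1 y hyB hxy
      have hm := hf.convexOn.le_max_of_mem_Icc (x := t' + x) (y := t' + y) (z := t + y)
        (Set.mem_univ _) (Set.mem_univ _) ⟨by linarith, by linarith⟩
      simp only [hg] at hy0 ⊢
      rcases le_max_iff.1 hm with h | h <;> linarith
    · intro x hx y hy
      have := hmem x (Finset.mem_filter.1 hx).1 y (Finset.mem_filter.1 hy).1
      rw [Finset.mem_neg']
      convert this using 1
      ring
  have hZ : (B.filter fun x => g x = 0).card ≤ 1 := by
    rw [Finset.card_le_one]
    intro x hx y hy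
    exact hmono.injective ((Finset.mem_filter.1 hx).2.trans (Finset.mem_filter.1 hy).2.symm)
  have hcov : B ⊆ (B.filter fun x => 0 < g x) ∪ (B.filter fun x => g x < 0) ∪
      (B.filter fun x => g x = 0) := by
    intro x hx
    simp only [Finset.mem_union, Finset.mem_filter, hx, true_and]
    rcases lt_trichotomy (g x) 0 with h | h | h <;> simp [h]
  have h1 := Finset.card_le_card hcov
  have h2 := Finset.card_union_le
    ((B.filter fun x => 0 < g x) ∪ (B.filter fun x => g x < 0)) (B.filter fun x => g x = 0)
  have h3 := Finset.card_union_le (B.filter fun x => 0 < g x) (B.filter fun x => g x < 0)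
  rcases le_total (B.filter fun x => 0 < g x).card (B.filter fun x => g x < 0).card with h | h
  · exact ⟨_, by omega, hN⟩
  · exact ⟨_, by omega, hP⟩

lemma card_fShift_neg (f : ℝ → ℝ) (A : Finset ℝ) (t t' : ℝ) :
    (fShift (-f) t A + fShift (-f) t' A - fShift (-f) t A).card =
      (fShift f t A + fShift f t' A - fShift f t A).card := by
  classical
  have h : ∀ s, fShift (-f) s A = -fShift f s A := by
    intro s
    ext z
    simp only [fShift, Finset.mem_image, Finset.mem_neg', Pi.neg_apply]
    simp only [neg_eq_iff_eq_neg]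
  rw [h, h, ← Finset.card_neg (fShift f t A + fShift f t' A - fShift f t A)]
  congr 1
  simp only [sub_eq_add_neg, neg_add]

/-- If `m` is the size of the larger of the two parts `{g > 0}`, `{g < 0}` of `B`, then
`m ≥ (|A| - 2) / 2` and `|A| ≥ 3` give `m ≥ |A| / 6`, while the number of values is at least
`m ^ 2 / 2`; hence the constant `1 / 72`. -/
lemma separated_bound {f : ℝ → ℝ}
    (hf : StrictConvexOn ℝ Set.univ f ∨ StrictConcaveOn ℝ Set.univ f)
    (A B : Finset ℝ) (hBA : B ⊆ A) (hA : 3 ≤ A.card) (hB : A.card ≤ B.card + 1)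
    (t t' : ℝ) (ht : t < t') (hsep : ∀ x ∈ B, ∀ y ∈ B, x < y → t' - t ≤ y - x) :
    (1 / 72 : ℝ) * (A.card : ℝ) ^ 2 ≤ ((fShift f t A + fShift f t' A - fShift f t A).card : ℝ) := by
  classical
  wlog hc : StrictConvexOn ℝ Set.univ f generalizing f
  · have hn : StrictConvexOn ℝ Set.univ (-f) := (hf.resolve_left hc).neg
    rw [← card_fShift_neg]
    exact this (Or.inl hn) hn
  obtain ⟨m, hm, hmS⟩ := convex_separated_bound hc B t t' ht hsep
  have hsub : ∀ s, fShift f s B ⊆ fShift f s A := fun s => Finset.image_subset_image hBA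
  have hcard := Finset.card_le_card
    (Finset.sub_subset_sub (Finset.add_subset_add (hsub t) (hsub t')) (hsub t))
  have h6 : A.card ≤ 6 * m := by omega
  have h72 : A.card ^ 2 ≤ 72 * (fShift f t A + fShift f t' A - fShift f t A).card := by
    have := Nat.pow_le_pow_left h6 2
    rw [mul_pow] at this
    omega
  have : ((A.card : ℝ)) ^ 2 ≤ 72 * ((fShift f t A + fShift f t' A - fShift f t A).card : ℝ) := by
    exact_mod_cast h72
  linarith

lemma exists_consecPair (A : Finset ℝ) {x y : ℝ} (hx : x ∈ A) (hy : y ∈ A) (hxy : x < y) :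
    ∃ z, ConsecPair A x z ∧ z ≤ y := by
  classical
  have hne : (A.filter fun z => x < z).Nonempty := ⟨y, Finset.mem_filter.2 ⟨hy, hxy⟩⟩
  have hmin := Finset.mem_filter.1 (Finset.min'_mem _ hne)
  refine ⟨_, ⟨hx, hmin.1, hmin.2, fun w hw h => ?_⟩,
    Finset.min'_le _ _ (Finset.mem_filter.2 ⟨hy, hxy⟩)⟩
  exact absurd (Finset.min'_le _ w (Finset.mem_filter.2 ⟨hw, h.1⟩)) (not_le.2 h.2)

theorem convex_quadratic_expander_nearest_pairs :
    ∃ c : ℝ, 0 < c ∧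
      ∀ (A : Finset ℝ) (f : ℝ → ℝ) (a a' b b' : ℝ), 3 ≤ A.card →
        (StrictConvexOn ℝ Set.univ f ∨ StrictConcaveOn ℝ Set.univ f) →
        NearestPair A a a' →
        SecondNearestPair A a a' b b' →
        c * (A.card : ℝ) ^ 2 ≤ ((fShift f a A + fShift f a' A - fShift f a A).card : ℝ) ∧
        c * (A.card : ℝ) ^ 2 ≤ ((fShift f b A + fShift f b' A - fShift f b A).card : ℝ) := by
  refine ⟨1 / 72, by norm_num, fun A f a a' b b' hA hf hab hb => ⟨?_, ?_⟩⟩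
  · exact separated_bound hf A A subset_rfl hA (by omega) a a' hab.1.2.2.1 hab.2
  · refine separated_bound hf A (A.erase a) (Finset.erase_subset _ _) hA ?_ b b' hb.1.2.2.1 ?_
    · rw [Finset.card_erase_add_one hab.1.1]
    · intro x hx y hy hxy
      obtain ⟨hxa, hxA⟩ := Finset.mem_erase.1 hx
      obtain ⟨z, hz, hzy⟩ := exists_consecPair A hxA (Finset.mem_of_mem_erase hy) hxy
      by_contra! h
      exact hxa (hb.2 x hxA z hz.2.1 hz (by linarith)).1
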